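/- For an IPPA sequence on a proper, convex, lower semicontinuous function h (no assumptions on the errors beyond nonnegativity and positivity of the step sizes), the squared norms of the exact proximal subgradients almost decrease: for every k ≥ 1, ‖s⋆^{k+1}‖² − ‖s⋆^{k}‖² ≤ (ε_k/γ_k)². -/

import Mathlib

open scoped RealInnerProductSpace
open Filter Asymptotics

noncomputable section

/-- The Fenchel conjugate of an `EReal`-valued function on a real inner product space. -/
def fenchel {Y : Type*} [NormedAddCommGroup Y] [InnerProductSpace ℝ Y]
    (h : Y → EReal) (s : Y) : EReal :=
  ⨆ l : Y, ((⟪s, l⟫ : ℝ) : EReal) - h l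

/-- The convex subdifferential of an `EReal`-valued function: `v ∈ ∂h(u)` iff
`h w ≥ h u + ⟪v, w − u⟫` for all `w`. -/
def subdiff {Y : Type*} [NormedAddCommGroup Y] [InnerProductSpace ℝ Y]
    (h : Y → EReal) (u : Y) : Set Y :=
  {v : Y | ∀ w : Y, h u + ((⟪v, w - u⟫ : ℝ) : EReal) ≤ h w}

/-!
The exact steps satisfy `s⋆ᵏ ∈ ∂h(λ⋆ᵏ)` and `s⋆ᵏ⁺¹ ∈ ∂h(λ⋆ᵏ⁺¹)`. With `f = (λᵏ - λ⋆ᵏ) / γₖ`, so that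
`‖f‖ ≤ εₖ / γₖ`, the displacement is `λ⋆ᵏ⁺¹ - λ⋆ᵏ = γₖ (f - s⋆ᵏ⁺¹)`, and monotonicity of `∂h` gives
`0 ≤ ⟪s⋆ᵏ⁺¹ - s⋆ᵏ, f - s⋆ᵏ⁺¹⟫`. Expanding `0 ≤ ‖s⋆ᵏ⁺¹ - s⋆ᵏ - f‖²` turns this into
`‖s⋆ᵏ⁺¹‖² - ‖s⋆ᵏ‖² ≤ ‖f‖²`.
-/

theorem le_of_forall_le_add_mul {a b c : ℝ}
    (hle : ∀ t : ℝ, 0 < t → t ≤ 1 → a ≤ b + t * c) : a ≤ b := by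
  have hlim : Tendsto (fun t : ℝ => b + t * c) (nhdsWithin 0 (Set.Ioi 0)) (nhds b) := by
    have hcont : Continuous fun t : ℝ => b + t * c := by fun_prop
    simpa using (hcont.tendsto 0).mono_left nhdsWithin_le_nhds
  refine ge_of_tendsto hlim ?_
  filter_upwards [Ioc_mem_nhdsGT one_pos] with t ht using hle t ht.1 ht.2

section InnerProductSpace

variable {Y : Type*} [NormedAddCommGroup Y] [InnerProductSpace ℝ Y]

theorem norm_sub_segment_sq_div (g t : ℝ) (z p w : Y) :
    ‖z - ((1 - t) • p + t • w)‖ ^ 2 / (2 * g) = ‖z - p‖ ^ 2 / (2 * g)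
      - t * ⟪g⁻¹ • (z - p), w - p⟫ + t * (t * (‖w - p‖ ^ 2 / (2 * g))) := by
  have hseg : z - ((1 - t) • p + t • w) = (z - p) - t • (w - p) := by module
  rw [hseg, norm_sub_sq_real, real_inner_smul_right, real_inner_smul_left, norm_smul, mul_pow,
    Real.norm_eq_abs, sq_abs]
  ring

theorem norm_sq_sub_norm_sq_le_of_inner_sub_sub_nonneg {a b f : Y} (hab : 0 ≤ ⟪a - b, f - a⟫) :
    ‖a‖ ^ 2 - ‖b‖ ^ 2 ≤ ‖f‖ ^ 2 := by
  have hsq : 0 ≤ ‖(a - b) - f‖ ^ 2 := by positivity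
  rw [norm_sub_sq_real, norm_sub_sq_real, inner_sub_left] at hsq
  rw [inner_sub_left, inner_sub_right, inner_sub_right, real_inner_self_eq_norm_sq,
    real_inner_comm a b] at hab
  linarith

end InnerProductSpace

/-- `p` is a proximal point of `h` at `z` with step size `g`: it minimizes
`μ ↦ h μ + ‖z - μ‖² / (2g)`. Uniqueness of the minimizer is not part of the notion. -/
def IsProxPoint {Y : Type*} [NormedAddCommGroup Y] (h : Y → EReal) (g : ℝ) (z p : Y) : Prop :=
  ∀ μ : Y, h p + ((‖z - p‖ ^ 2 / (2 * g) : ℝ) : EReal)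
    ≤ h μ + ((‖z - μ‖ ^ 2 / (2 * g) : ℝ) : EReal)

section Prox

variable {Y : Type*} [NormedAddCommGroup Y] {h : Y → EReal} {g : ℝ} {z p w : Y}

theorem IsProxPoint.ne_top (hp : IsProxPoint h g z p) (hw : h w ≠ ⊤) : h p ≠ ⊤ := by
  intro htop
  have hle := hp w
  rw [htop, EReal.top_add_coe, top_le_iff] at hle
  exact EReal.add_ne_top hw (EReal.coe_ne_top _) hle

theorem IsProxPoint.ne_bot (hp : IsProxPoint h g z p) (hbot : h p ≠ ⊥) : h w ≠ ⊥ := by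
  intro hw
  have hle := hp w
  rw [hw, EReal.bot_add, le_bot_iff, EReal.add_eq_bot_iff] at hle
  exact hle.elim hbot (EReal.coe_ne_bot _)

end Prox

section Subgradient

variable {Y : Type*} [NormedAddCommGroup Y] [InnerProductSpace ℝ Y]
  {h : Y → EReal} {g : ℝ} {u u' v v' x z p : Y}

theorem IsProxPoint.mem_subdiff
    (hcvx : ∀ u v : Y, ∀ a b : ℝ, 0 ≤ a → 0 ≤ b → a + b = 1 →
      h (a • u + b • v) ≤ (a : EReal) * h u + (b : EReal) * h v)
    (hp : IsProxPoint h g z p) : g⁻¹ • (z - p) ∈ subdiff h p := by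
  intro w
  by_cases hbot : h p = ⊥
  · simp [hbot]
  by_cases hw : h w = ⊤
  · simp [hw]
  obtain ⟨P, hP⟩ : ∃ P : ℝ, (P : EReal) = h p :=
    ⟨_, EReal.coe_toReal (hp.ne_top hw) hbot⟩
  obtain ⟨W, hW⟩ : ∃ W : ℝ, (W : EReal) = h w :=
    ⟨_, EReal.coe_toReal hw (hp.ne_bot hbot)⟩
  rw [← hP, ← hW, ← EReal.coe_add, EReal.coe_le_coe_iff]
  -- Compare `p` with the points of the segment from `p` to `w`, divide by `t` and let `t → 0⁺`.
  refine le_of_forall_le_add_mul (c := ‖w - p‖ ^ 2 / (2 * g)) fun t ht ht1 => ?_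
  have hsegment : P + ‖z - p‖ ^ 2 / (2 * g)
      ≤ (1 - t) * P + t * W + ‖z - ((1 - t) • p + t • w)‖ ^ 2 / (2 * g) := by
    have hle := (hp ((1 - t) • p + t • w)).trans
      (add_le_add_left (hcvx p w (1 - t) t (by linarith) ht.le (by ring)) _)
    rw [← hP, ← hW] at hle
    exact_mod_cast hle
  rw [norm_sub_segment_sq_div] at hsegment
  refine le_of_mul_le_mul_left ?_ ht
  linarith

theorem inner_sub_sub_nonneg_of_mem_subdiff (hbot : h u ≠ ⊥) (htop : h u ≠ ⊤)
    (hv : v ∈ subdiff h u) (hv' : v' ∈ subdiff h u') : 0 ≤ ⟪v' - v, u' - u⟫ := by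
  have hsum : h u + ((⟪v, u' - u⟫ : ℝ) : EReal) + ((⟪v', u - u'⟫ : ℝ) : EReal) ≤ h u :=
    (add_le_add_left (hv u') _).trans (hv' u)
  lift h u to ℝ using ⟨htop, hbot⟩ with r
  norm_cast at hsum
  rw [← neg_sub u' u, inner_neg_right] at hsum
  rw [inner_sub_left]
  linarith

theorem norm_sq_sub_norm_sq_le_of_mem_subdiff (hg : 0 < g) (hbot : h u ≠ ⊥) (htop : h u ≠ ⊤)
    (hv : v ∈ subdiff h u) (hv' : g⁻¹ • (x - u') ∈ subdiff h u') :
    ‖g⁻¹ • (x - u')‖ ^ 2 - ‖v‖ ^ 2 ≤ (‖x - u‖ / g) ^ 2 := by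
  have hnorm : ‖g⁻¹ • (x - u)‖ = ‖x - u‖ / g := by
    rw [norm_smul, norm_inv, Real.norm_of_nonneg hg.le, inv_mul_eq_div]
  rw [← hnorm]
  apply norm_sq_sub_norm_sq_le_of_inner_sub_sub_nonneg
  have hstep : g⁻¹ • (x - u) - g⁻¹ • (x - u') = g⁻¹ • (u' - u) := by module
  rw [hstep, real_inner_smul_right]
  exact mul_nonneg (inv_nonneg.mpr hg.le) (inner_sub_sub_nonneg_of_mem_subdiff hbot htop hv hv')

end Subgradient

theorem statement5_general {Y : Type*} [NormedAddCommGroup Y] [InnerProductSpace ℝ Y]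
    {h : Y → EReal} (hbot : ∀ u : Y, h u ≠ ⊥) (htop : ∃ u : Y, h u ≠ ⊤)
    (hcvx : ∀ u v : Y, ∀ a b : ℝ, 0 ≤ a → 0 ≤ b → a + b = 1 →
      h (a • u + b • v) ≤ (a : EReal) * h u + (b : EReal) * h v)
    {γ ε : ℕ → ℝ} (hγ : ∀ k, 0 < γ k) {lam lamstar sstar : ℕ → Y}
    (hprox : ∀ k, IsProxPoint h (γ k) (lam k) (lamstar (k + 1)))
    (hsstar : ∀ k, sstar (k + 1) = (γ k)⁻¹ • (lam k - lamstar (k + 1)))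
    (herr : ∀ k, ‖lam (k + 1) - lamstar (k + 1)‖ ≤ ε (k + 1)) (k : ℕ) (hk : 1 ≤ k) :
    ‖sstar (k + 1)‖ ^ 2 - ‖sstar k‖ ^ 2 ≤ (ε k / γ k) ^ 2 := by
  obtain ⟨w, hw⟩ := htop
  obtain ⟨j, rfl⟩ := Nat.exists_eq_add_of_le' hk
  have hmem (i : ℕ) : (γ i)⁻¹ • (lam i - lamstar (i + 1)) ∈ subdiff h (lamstar (i + 1)) :=
    (hprox i).mem_subdiff hcvx
  have hγj := hγ (j + 1)
  calc ‖sstar (j + 1 + 1)‖ ^ 2 - ‖sstar (j + 1)‖ ^ 2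
      ≤ (‖lam (j + 1) - lamstar (j + 1)‖ / γ (j + 1)) ^ 2 := by
        rw [hsstar, hsstar]
        exact norm_sq_sub_norm_sq_le_of_mem_subdiff hγj (hbot _)
          ((hprox j).ne_top hw) (hmem j) (hmem (j + 1))
    _ ≤ (ε (j + 1) / γ (j + 1)) ^ 2 := by
        gcongr
        exact herr j

theorem statement5
    {Y : Type*}
    [NormedAddCommGroup Y] [InnerProductSpace ℝ Y] [CompleteSpace Y]
    (h : Y → EReal)
    (hh_bot : ∀ u : Y, h u ≠ ⊥) (hh_top : ∃ u : Y, h u ≠ ⊤)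
    (hh_lsc : LowerSemicontinuous h)
    (hh_cvx : ∀ u v : Y, ∀ a b : ℝ, 0 ≤ a → 0 ≤ b → a + b = 1 →
      h (a • u + b • v) ≤ (a : EReal) * h u + (b : EReal) * h v)
    (γ : ℕ → ℝ) (hγ : ∀ k : ℕ, 0 < γ k) (ε : ℕ → ℝ) (hε : ∀ k : ℕ, 0 ≤ ε k)
    (lam lamstar sstar ss : ℕ → Y)
    (hmin : ∀ (k : ℕ) (μ : Y),
      h (lamstar (k+1)) + ((‖lam k - lamstar (k+1)‖ ^ 2 / (2 * γ k) : ℝ) : EReal)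
        ≤ h μ + ((‖lam k - μ‖ ^ 2 / (2 * γ k) : ℝ) : EReal))
    (hsstar : ∀ k : ℕ, sstar (k+1) = (γ k)⁻¹ • (lam k - lamstar (k+1)))
    (herr : ∀ k : ℕ, ‖lam (k+1) - lamstar (k+1)‖ ≤ ε (k+1))
    (hss : ∀ k : ℕ, ss (k+1) = (γ k)⁻¹ • (lam k - lam (k+1)))
    :
    ∀ k : ℕ, 1 ≤ k → ‖sstar (k+1)‖ ^ 2 - ‖sstar k‖ ^ 2 ≤ (ε k / γ k) ^ 2 := by
  exact statement5_general hh_bot hh_top hh_cvx hγ hmin hsstar herr
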